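/- For n = 2, there exists a social choice function f : S₀² → A that is onto and pairwise strategy-proof but is not a target rule with a default. (In particular, the serial dictatorship f^d with f^d(R) = τ(R_1) if R_1 ≠ R⁰, f^d(R) = τ(R_2) if R_1 = R⁰ and R_2 ≠ R⁰, and f^d(R⁰, R⁰) = 0, has these properties.) -/

import Mathlib

/-- The set of alternatives: the closed interval [0,1]. -/
abbrev A : Type := Set.Icc (0:ℝ) 1

def zeroA : A := ⟨0, by constructor <;> norm_num⟩
def oneA : A := ⟨1, by constructor <;> norm_num⟩

/-- A preference: a complete (total) and transitive binary relation on A. -/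
structure Pref : Type where
  rel : A → A → Prop
  total : ∀ a b : A, rel a b ∨ rel b a
  trans : ∀ a b c : A, rel a b → rel b c → rel a c

/-- Strict part of a preference. -/
def Pref.P (R : Pref) (a b : A) : Prop := R.rel a b ∧ ¬ R.rel b a

/-- `p` is a peak of `R`: `R` is single-peaked with peak `p`. -/
def Pref.IsPeak (R : Pref) (p : A) : Prop :=
  ∀ a b : A, ((p ≤ a ∧ a < b) ∨ (b < a ∧ a ≤ p)) → R.P a b

/-- Single-peaked preferences. -/
def SinglePeaked (R : Pref) : Prop := ∃ p : A, R.IsPeak p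

/-- The completely indifferent preference R⁰. -/
def R0 : Pref :=
  ⟨fun _ _ => True, fun _ _ => Or.inl trivial, fun _ _ _ _ _ => trivial⟩

/-- The augmented domain S₀ = S ∪ {R⁰}. -/
def S0 : Type := {R : Pref // SinglePeaked R ∨ R = R0}

/-- The completely indifferent profile R^{0N}. -/
def indiffProfile (n : ℕ) : Fin n → S0 := fun _ => ⟨R0, Or.inr rfl⟩

open Classical in
/-- The peak of a single-peaked preference (junk value `zeroA` otherwise). -/
noncomputable def peak (R : Pref) : A :=
  if h : SinglePeaked R then h.choose else zeroA

/-- τ̲(R): the smallest peak among non-indifferent agents (as a real number). -/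
noncomputable def tmin {n : ℕ} (R : Fin n → S0) : ℝ :=
  sInf {x : ℝ | ∃ i : Fin n, (R i).1 ≠ R0 ∧ ((peak (R i).1 : ℝ) = x)}

/-- τ̄(R): the largest peak among non-indifferent agents (as a real number). -/
noncomputable def tmax {n : ℕ} (R : Fin n → S0) : ℝ :=
  sSup {x : ℝ | ∃ i : Fin n, (R i).1 ≠ R0 ∧ ((peak (R i).1 : ℝ) = x)}

/-- Onto-ness. -/
def Onto {n : ℕ} (f : (Fin n → S0) → A) : Prop := ∀ a : A, ∃ R : Fin n → S0, f R = a

/-- (Individual) strategy-proofness. -/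
def StrategyProof {n : ℕ} (f : (Fin n → S0) → A) : Prop :=
  ∀ (R : Fin n → S0) (i : Fin n) (Ri' : S0),
    (R i).1.rel (f R) (f (Function.update R i Ri'))

/-- No profitable deviation by the coalition `S`. -/
def CoalitionSP {n : ℕ} (f : (Fin n → S0) → A) (S : Finset (Fin n)) : Prop :=
  ¬ ∃ R R' : Fin n → S0,
      (∀ i ∉ S, R' i = R i) ∧
      (∀ i ∈ S, (R i).1.rel (f R') (f R)) ∧
      (∃ j ∈ S, (R j).1.P (f R') (f R))

/-- Group strategy-proofness. -/
def GroupSP {n : ℕ} (f : (Fin n → S0) → A) : Prop :=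
  ∀ S : Finset (Fin n), S.Nonempty → CoalitionSP f S

/-- Pairwise strategy-proofness. -/
def PairwiseSP {n : ℕ} (f : (Fin n → S0) → A) : Prop :=
  ∀ S : Finset (Fin n), S.Nonempty → S.card ≤ 2 → CoalitionSP f S

/-- No deviation making every member of `S` strictly better off. -/
def WeakCoalitionSP {n : ℕ} (f : (Fin n → S0) → A) (S : Finset (Fin n)) : Prop :=
  ¬ ∃ R R' : Fin n → S0,
      (∀ i ∉ S, R' i = R i) ∧
      (∀ i ∈ S, (R i).1.P (f R') (f R))

/-- Weak group strategy-proofness. -/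
def WeakGroupSP {n : ℕ} (f : (Fin n → S0) → A) : Prop :=
  ∀ S : Finset (Fin n), S.Nonempty → WeakCoalitionSP f S

/-- `a` is efficient at the profile `R`. -/
def EfficientAt {n : ℕ} (R : Fin n → S0) (a : A) : Prop :=
  ¬ ∃ b : A, b ≠ a ∧ (∀ i : Fin n, (R i).1.rel b a) ∧ (∃ j : Fin n, (R j).1.P b a)

/-- Efficiency of a social choice function. -/
def Efficient {n : ℕ} (f : (Fin n → S0) → A) : Prop := ∀ R : Fin n → S0, EfficientAt R (f R)

/-- The tops-only property. -/
def TopsOnly {n : ℕ} (f : (Fin n → S0) → A) : Prop :=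
  ∀ R R' : Fin n → S0,
    (∀ i : Fin n, (R i).1 = R0 ↔ (R' i).1 = R0) →
    (∀ i : Fin n, (R i).1 ≠ R0 → peak (R i).1 = peak (R' i).1) →
    f R = f R'

/-- Target rules with a default. -/
def IsTargetRule {n : ℕ} (f : (Fin n → S0) → A) : Prop :=
  ∃ x y : A, f (indiffProfile n) = y ∧
    ∀ R : Fin n → S0, R ≠ indiffProfile n →
      ((tmin R ≤ (x : ℝ) ∧ (x : ℝ) ≤ tmax R) → f R = x) ∧
      ((x : ℝ) < tmin R → (f R : ℝ) = tmin R) ∧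
      (tmax R < (x : ℝ) → (f R : ℝ) = tmax R)

/-!
A target rule sees a profile only through its set of peaks, so it is anonymous, which the serial
dictatorship is not. With two agents the serial dictatorship is nevertheless group strategy-proof:
either agent `0` gets their unique best alternative and so only joins deviations that keep the
outcome, or agent `0` is indifferent, can never gain strictly, and agent `1` gets their best
alternative. With a third agent, an indifferent agent `0` could take over the dictatorship in the
third agent's favour, so the argument stops at `n = 2`.
-/

namespace Pref

variable {R : Pref} {a b p : A}

lemma P_irrefl (R : Pref) (a : A) : ¬ R.P a a := fun h => h.2 h.1

lemma not_P_R0 (a b : A) : ¬ R0.P a b := fun h => h.2 trivial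

lemma IsPeak.P_of_ne (hp : R.IsPeak p) (hb : b ≠ p) : R.P p b :=
  hp p b (hb.lt_or_gt.symm.imp (⟨le_rfl, ·⟩) (⟨·, le_rfl⟩))

lemma IsPeak.eq_of_rel (hp : R.IsPeak p) (hb : R.rel b p) : b = p := by
  by_contra hne
  exact (hp.P_of_ne hne).2 hb

lemma IsPeak.unique (ha : R.IsPeak a) (hb : R.IsPeak b) : a = b :=
  (R.total a b).elim hb.eq_of_rel fun h => (ha.eq_of_rel h).symm

lemma IsPeak.ne_R0 (hp : R.IsPeak p) : R ≠ R0 := by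
  rintro rfl
  obtain ⟨b, hb⟩ := exists_ne p
  exact not_P_R0 p b (hp.P_of_ne hb)

lemma isPeak_peak (hR : SinglePeaked R) : R.IsPeak (peak R) := by
  rw [peak, dif_pos hR]
  exact hR.choose_spec

lemma IsPeak.peak_eq (hp : R.IsPeak p) : peak R = p :=
  (isPeak_peak ⟨p, hp⟩).unique hp

/-- The Euclidean preference with peak `p`, ranking alternatives by their distance to `p`. It
witnesses that every alternative is the peak of some preference. -/
def euclidean (p : A) : Pref where
  rel a b := dist a p ≤ dist b p
  total _ _ := le_total _ _
  trans _ _ _ := le_trans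

lemma isPeak_euclidean (p : A) : (euclidean p).IsPeak p := by
  intro a b h
  suffices hdist : dist a p < dist b p from ⟨hdist.le, hdist.not_ge⟩
  rw [Subtype.dist_eq, Subtype.dist_eq, Real.dist_eq, Real.dist_eq]
  simp only [← Subtype.coe_le_coe, ← Subtype.coe_lt_coe] at h
  rcases h with ⟨hpa, hab⟩ | ⟨hba, hap⟩
  · rw [abs_of_nonneg (by linarith), abs_of_nonneg (by linarith)]
    exact sub_lt_sub_right hab _
  · rw [abs_sub_comm, abs_sub_comm (b : ℝ), abs_of_nonneg (by linarith),
      abs_of_nonneg (by linarith)]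
    exact sub_lt_sub_left hba _

end Pref

namespace S0

lemma eq_peak_of_rel {R : S0} (hR : R.1 ≠ R0) {a : A} (ha : R.1.rel a (peak R.1)) :
    a = peak R.1 :=
  (Pref.isPeak_peak (R.2.resolve_right hR)).eq_of_rel ha

lemma not_P_peak (R : S0) (a : A) : ¬ R.1.P a (peak R.1) := by
  intro ha
  by_cases hR : R.1 = R0
  · rw [hR] at ha
    exact Pref.not_P_R0 _ _ ha
  · rw [eq_peak_of_rel hR ha.1] at ha
    exact Pref.P_irrefl _ _ ha

/-- The Euclidean preference with peak `p` as an element of the domain `S₀`. -/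
def euclidean (p : A) : S0 := ⟨Pref.euclidean p, Or.inl ⟨p, Pref.isPeak_euclidean p⟩⟩

lemma euclidean_ne_R0 (p : A) : (euclidean p).1 ≠ R0 := (Pref.isPeak_euclidean p).ne_R0

lemma peak_euclidean (p : A) : peak (euclidean p).1 = p := (Pref.isPeak_euclidean p).peak_eq

end S0

section Anonymity

variable {n : ℕ}

/-- Anonymity: the outcome does not depend on the names of the agents. It separates target rules
from the serial dictatorship. -/
def Anonymous (f : (Fin n → S0) → A) : Prop :=
  ∀ (σ : Equiv.Perm (Fin n)) (R : Fin n → S0), f (R ∘ σ) = f R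

lemma setOf_peak_comp_perm (σ : Equiv.Perm (Fin n)) (R : Fin n → S0) :
    {x : ℝ | ∃ i, ((R ∘ σ) i).1 ≠ R0 ∧ (peak ((R ∘ σ) i).1 : ℝ) = x} =
      {x : ℝ | ∃ i, (R i).1 ≠ R0 ∧ (peak (R i).1 : ℝ) = x} := by
  ext x
  simp only [Set.mem_ofPred_eq]
  exact σ.exists_congr fun _ => Iff.rfl

lemma tmin_comp_perm (σ : Equiv.Perm (Fin n)) (R : Fin n → S0) : tmin (R ∘ σ) = tmin R :=
  congrArg sInf (setOf_peak_comp_perm σ R)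

lemma tmax_comp_perm (σ : Equiv.Perm (Fin n)) (R : Fin n → S0) : tmax (R ∘ σ) = tmax R :=
  congrArg sSup (setOf_peak_comp_perm σ R)

lemma comp_perm_eq_indiffProfile_iff (σ : Equiv.Perm (Fin n)) (R : Fin n → S0) :
    R ∘ σ = indiffProfile n ↔ R = indiffProfile n :=
  σ.surjective.injective_comp_right.eq_iff' rfl

lemma IsTargetRule.anonymous {f : (Fin n → S0) → A} (hf : IsTargetRule f) : Anonymous f := by
  obtain ⟨x, y, -, htarget⟩ := hf
  intro σ R
  by_cases hR : R = indiffProfile n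
  · rw [hR, (comp_perm_eq_indiffProfile_iff σ _).2 rfl]
  have hRσ := mt (comp_perm_eq_indiffProfile_iff σ R).1 hR
  obtain ⟨hmid, hlow, hhigh⟩ := htarget R hR
  obtain ⟨hmidσ, hlowσ, hhighσ⟩ := htarget (R ∘ σ) hRσ
  rw [tmin_comp_perm, tmax_comp_perm] at hmidσ
  rw [tmin_comp_perm] at hlowσ
  rw [tmax_comp_perm] at hhighσ
  rcases lt_or_ge (x : ℝ) (tmin R) with hx | hmin
  · exact Subtype.ext ((hlowσ hx).trans (hlow hx).symm)
  rcases lt_or_ge (tmax R) (x : ℝ) with hx | hmax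
  · exact Subtype.ext ((hhighσ hx).trans (hhigh hx).symm)
  · exact (hmidσ ⟨hmin, hmax⟩).trans (hmid ⟨hmin, hmax⟩).symm

end Anonymity

lemma GroupSP.pairwiseSP {n : ℕ} {f : (Fin n → S0) → A} (hf : GroupSP f) : PairwiseSP f :=
  fun S hS _ => hf S hS

open Classical in
/-- The serial dictatorship `f^d`: agent `0` dictates unless indifferent, in which case agent `1`
does. The paper's default `f^d(R⁰, R⁰) = 0` is the junk value of `peak` at `R0`. -/
noncomputable def serialDictatorship (R : Fin 2 → S0) : A :=
  if (R 0).1 = R0 then peak (R 1).1 else peak (R 0).1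

section SerialDictatorship

variable {R : Fin 2 → S0}

lemma serialDictatorship_of_eq_R0 (h0 : (R 0).1 = R0) : serialDictatorship R = peak (R 1).1 :=
  if_pos h0

lemma serialDictatorship_of_ne_R0 (h0 : (R 0).1 ≠ R0) : serialDictatorship R = peak (R 0).1 :=
  if_neg h0

lemma serialDictatorship_of_euclidean {p : A} (h0 : R 0 = S0.euclidean p) :
    serialDictatorship R = p := by
  rw [serialDictatorship_of_ne_R0 (h0 ▸ S0.euclidean_ne_R0 p), h0, S0.peak_euclidean]

lemma onto_serialDictatorship : Onto serialDictatorship := fun a =>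
  ⟨fun _ => S0.euclidean a, serialDictatorship_of_euclidean rfl⟩

lemma groupSP_serialDictatorship : GroupSP serialDictatorship := by
  rintro S - ⟨R, R', hout, hweak, j, -, hgain⟩
  by_cases h0 : (R 0).1 = R0
  · rw [serialDictatorship_of_eq_R0 h0] at hgain
    match j with
    | 0 => exact Pref.not_P_R0 _ _ (h0 ▸ hgain)
    | 1 => exact S0.not_P_peak _ _ hgain
  · have hunchanged : serialDictatorship R' = serialDictatorship R := by
      by_cases hmem : 0 ∈ S
      · have hrel := hweak 0 hmem
        rw [serialDictatorship_of_ne_R0 h0] at hrel ⊢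
        exact S0.eq_peak_of_rel h0 hrel
      · have hR' : R' 0 = R 0 := hout 0 hmem
        rw [serialDictatorship_of_ne_R0 h0, serialDictatorship_of_ne_R0 (hR' ▸ h0), hR']
    rw [hunchanged] at hgain
    exact Pref.P_irrefl _ _ hgain

lemma not_anonymous_serialDictatorship : ¬ Anonymous serialDictatorship := by
  intro h
  have hswap := h (Equiv.swap 0 1) ![S0.euclidean 0, S0.euclidean 1]
  rw [serialDictatorship_of_euclidean (p := 1) rfl,
    serialDictatorship_of_euclidean (p := 0) rfl] at hswap
  exact one_ne_zero hswap

end SerialDictatorship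

/-- For n = 2, there exists an SCF that is onto and pairwise
strategy-proof but is not a target rule with a default. -/
theorem stmt_14 :
    ∃ f : (Fin 2 → S0) → A,
      Onto f ∧ PairwiseSP f ∧ ¬ IsTargetRule f :=
  ⟨serialDictatorship, onto_serialDictatorship, groupSP_serialDictatorship.pairwiseSP,
    fun htarget => not_anonymous_serialDictatorship htarget.anonymous⟩
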